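/- Let A = F ⊕ A_1 ⊕ A_2 ⊕ ··· be a graded algebra generated in degree 1, let d > 3, and suppose that in the A∞-structure on E(A) induced from the bar/cobar construction T(J*) the only nontrivial multiplications are m_2 and m_{d−1}, and that (E(A), m_2, m_{d−1}) is a reduced (2, d−1)-algebra generated by E^1(A). Then A is a piecewise-Koszul algebra with period p = 3 and jump degree d, i.e. Ext^n_A(F,F) = Ext^n_A(F,F)_{δ^d_3(n)} for all n ≥ 0. -/

import Mathlib

noncomputable section

/-- The jump function `δ^d_p(n) = ((n − (n mod p))/p)·d + (n mod p)`. -/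
def jump (d p n : ℕ) : ℕ := (n - n % p) / p * d + n % p

/-- A positively graded `F`-algebra `A = ⊕_{i≥0} A_i`. -/
structure GradedAlg (F : Type) [Field F] where
  A : Type
  [ringA : Ring A]
  [algA : Algebra F A]
  grading : ℕ → Submodule F A
  [graded : GradedAlgebra grading]

attribute [instance] GradedAlg.ringA GradedAlg.algA GradedAlg.graded

namespace GradedAlg

variable {F : Type} [Field F] (𝒜 : GradedAlg F)

/-- The graded Jacobson radical `J = ⊕_{i≥1} A_i`, i.e. the irrelevant ideal. -/
def jideal : Ideal 𝒜.A := (HomogeneousIdeal.irrelevant 𝒜.grading).toIdeal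

/-- The standing assumptions: `A_0` is a semisimple Artin algebra, `A` is generated in
degrees 0 and 1 (`A_i · A_j = A_{i+j}`), and `A_1` is finite dimensional over `F`. -/
structure Standing : Prop where
  semisimple : IsSemisimpleRing ↥(𝒜.grading 0)
  artinian : IsArtinianRing ↥(𝒜.grading 0)
  gen01 : ∀ i j : ℕ, 𝒜.grading i * 𝒜.grading j = 𝒜.grading (i + j)
  findim : FiniteDimensional F ↥(𝒜.grading 1)

/-- A (ℤ-)graded module over the graded algebra `𝒜`. -/
structure GMod where
  M : Type
  [acg : AddCommGroup M]
  [modF : Module F M]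
  [modA : Module 𝒜.A M]
  [tower : IsScalarTower F 𝒜.A M]
  [scomm : SMulCommClass 𝒜.A F M]
  grading : ℤ → Submodule F M
  sup_eq_top : (⨆ j : ℤ, grading j) = ⊤
  indep : iSupIndep grading
  smul_mem : ∀ {i : ℕ} {j : ℤ} {a : 𝒜.A} {m : M},
    a ∈ 𝒜.grading i → m ∈ grading j → a • m ∈ grading ((i : ℤ) + j)

attribute [instance] GMod.acg GMod.modF GMod.modA GMod.tower GMod.scomm

variable {𝒜}

/-- A degree-zero morphism of graded modules. -/
structure GHom (M N : 𝒜.GMod) where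
  lin : M.M →ₗ[𝒜.A] N.M
  grad : ∀ (j : ℤ) (x : M.M), x ∈ M.grading j → lin x ∈ N.grading j

/-- A graded module is generated in degree `s` if `A · M_s = M`. -/
def GMod.GenInDeg (M : 𝒜.GMod) (s : ℤ) : Prop :=
  Submodule.span 𝒜.A (M.grading s : Set M.M) = ⊤

/-- `T` is the trivial graded module `A_0 = A/J`, concentrated in degree `0`. -/
def IsTrivialGMod (T : 𝒜.GMod) : Prop :=
  (∀ j : ℤ, j ≠ 0 → T.grading j = ⊥) ∧
    Nonempty (T.M ≃ₗ[𝒜.A] (𝒜.A ⧸ 𝒜.jideal))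

/-- A minimal graded projective resolution
`⋯ → P_{n+1} → P_n → ⋯ → P_0 → M → 0` of the graded module `M`,
with finitely generated terms. -/
structure MinRes (M : 𝒜.GMod) where
  P : ℕ → 𝒜.GMod
  d : ∀ n : ℕ, GHom (P (n + 1)) (P n)
  aug : GHom (P 0) M
  fg : ∀ n, Module.Finite 𝒜.A (P n).M
  projective : ∀ n, Module.Projective 𝒜.A (P n).M
  aug_surj : Function.Surjective aug.lin
  exact_aug : LinearMap.range (d 0).lin = LinearMap.ker aug.lin
  exact : ∀ n, LinearMap.range (d (n + 1)).lin = LinearMap.ker (d n).lin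
  minimal : ∀ n, LinearMap.range (d n).lin ≤ 𝒜.jideal • (⊤ : Submodule 𝒜.A (P n).M)

variable (𝒜)

/-- `M` is a piecewise-Koszul module (period `p`, jump degree `d`, shift `s`):
it has a minimal graded projective resolution with `P_n` generated in degree `δ^d_p(n) + s`. -/
def IsPKMod (p d : ℕ) (s : ℤ) (M : 𝒜.GMod) : Prop :=
  ∃ R : MinRes M, ∀ n : ℕ, (R.P n).GenInDeg ((jump d p n : ℤ) + s)

/-- `A` is a piecewise-Koszul algebra (period `p`, jump degree `d`): the trivial module `T`
admits a minimal graded projective resolution with `P_n` generated in degree `δ^d_p(n)`. -/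
def IsPKAlg (p d : ℕ) (T : 𝒜.GMod) : Prop := IsPKMod 𝒜 p d 0 T

/-- A Koszul module: a minimal graded projective resolution with `P_n` generated in degree `n`. -/
def IsKoszulMod (M : 𝒜.GMod) : Prop :=
  ∃ R : MinRes M, ∀ n : ℕ, (R.P n).GenInDeg (n : ℤ)

variable {𝒜}

section Ext

variable (T : 𝒜.GMod) {M : 𝒜.GMod}

/-- The space of `A`-linear maps `P_n → T` (cochains). -/
abbrev HomSp (R : MinRes M) (n : ℕ) := (R.P n).M →ₗ[𝒜.A] T.M

/-- Precomposition, as an `F`-linear map on cochains. -/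
def precompF {M₁ M₂ : 𝒜.GMod} (g : M₁.M →ₗ[𝒜.A] M₂.M) :
    (M₂.M →ₗ[𝒜.A] T.M) →ₗ[F] (M₁.M →ₗ[𝒜.A] T.M) where
  toFun f := f ∘ₗ g
  map_add' f₁ f₂ := by ext x; simp
  map_smul' c f := by ext x; simp

/-- Cocycles: maps `P_n → T` vanishing on the image of `P_{n+1}`. -/
def cocyc (R : MinRes M) (n : ℕ) : Submodule F (HomSp T R n) :=
  LinearMap.ker (precompF T (R.d n).lin)

/-- Coboundaries: maps `P_n → T` factoring through `d_{n-1}`. -/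
def cobound (R : MinRes M) : (n : ℕ) → Submodule F (HomSp T R n)
  | 0 => ⊥
  | n + 1 => LinearMap.range (precompF T (R.d n).lin)

/-- The coboundaries, viewed inside the cocycles. -/
def extRel (R : MinRes M) (n : ℕ) : Submodule F ↥(cocyc T R n) :=
  (cobound T R n).comap (cocyc T R n).subtype

/-- `Ext^n_A(M, T)`, computed from the resolution `R` of `M`. -/
abbrev ExtQ (R : MinRes M) (n : ℕ) := ↥(cocyc T R n) ⧸ extRel T R n

/-- The class in `Ext^n_A(M,T)` of a cocycle. -/
def extCls {R : MinRes M} {n : ℕ} {f : HomSp T R n} (hf : f ∈ cocyc T R n) :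
    ExtQ T R n :=
  Submodule.Quotient.mk ⟨f, hf⟩

/-- Cochains of shift-degree `j`: maps `P_n → T` vanishing on every `(P_n)_i` with `i ≠ j`. -/
def homDeg (R : MinRes M) (n : ℕ) (j : ℤ) : Submodule F (HomSp T R n) where
  carrier := {f | ∀ i : ℤ, i ≠ j → ∀ x ∈ (R.P n).grading i, f x = 0}
  add_mem' := fun hf hg i hi x hx => by
    simp only [LinearMap.add_apply, hf i hi x hx, hg i hi x hx, add_zero]
  zero_mem' := fun i hi x hx => rfl
  smul_mem' := fun c f hf i hi x hx => by
    simp only [LinearMap.smul_apply, hf i hi x hx, smul_zero]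

/-- The shift-degree `j` component `Ext^n_A(M,T)_j`. -/
def extComp (R : MinRes M) (n : ℕ) (j : ℤ) : Submodule F (ExtQ T R n) :=
  Submodule.map (extRel T R n).mkQ ((homDeg T R n j).comap (cocyc T R n).subtype)

/-- Transport `Ext` along an equality of cohomological degrees. -/
def extCast (R : MinRes M) {a b : ℕ} (h : a = b) : ExtQ T R a ≃ₗ[F] ExtQ T R b :=
  h ▸ LinearEquiv.refl F (ExtQ T R a)

/-- A chain map lifting of a cochain `g : P_j → T` over the resolutions `RM` of `M`
and `RT` of `T`. -/
structure ChainLift (RT : MinRes T) (RM : MinRes M) (j : ℕ)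
    (g : (RM.P j).M →ₗ[𝒜.A] T.M) where
  ℓ : ∀ m k : ℕ, m = k + j → ((RM.P m).M →ₗ[𝒜.A] (RT.P k).M)
  comm_aug : RT.aug.lin ∘ₗ ℓ j 0 (by omega) = g
  comm : ∀ k : ℕ, (RT.d k).lin ∘ₗ ℓ (k + j + 1) (k + 1) (by omega) =
    ℓ (k + j) k rfl ∘ₗ (RM.d (k + j)).lin

/-- `μ` is the (bigraded family of) Yoneda product(s)
`Ext^i(T,T) ⊗ Ext^j(M,T) → Ext^{i+j}(M,T)`: it is computed by composing a cocycle
`f : P_i → T` with a chain lifting of a cocycle `g : Q_j → T`. -/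
def IsYonedaMul (RT : MinRes T) (RM : MinRes M)
    (μ : ∀ i j : ℕ, ExtQ T RT i →ₗ[F] ExtQ T RM j →ₗ[F] ExtQ T RM (i + j)) : Prop :=
  ∀ (i j : ℕ) (f : HomSp T RT i) (hf : f ∈ cocyc T RT i)
    (g : HomSp T RM j) (hg : g ∈ cocyc T RM j)
    (L : ChainLift T RT RM j g)
    (hc : f ∘ₗ L.ℓ (i + j) i (by omega) ∈ cocyc T RM (i + j)),
    μ i j (extCls T hf) (extCls T hg) = extCls T hc

/-- `E(A) = Ext^*_A(A_0,A_0)` is generated in the ext-degrees belonging to `S`. -/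
def ExtGenIn (RT : MinRes T)
    (μ : ∀ i j : ℕ, ExtQ T RT i →ₗ[F] ExtQ T RT j →ₗ[F] ExtQ T RT (i + j))
    (S : Set ℕ) : Prop :=
  ∀ W : (n : ℕ) → Submodule F (ExtQ T RT n),
    (∀ n ∈ S, W n = ⊤) →
    (∀ (i j : ℕ) (x : ExtQ T RT i) (y : ExtQ T RT j),
      x ∈ W i → y ∈ W j → μ i j x y ∈ W (i + j)) →
    ∀ n, W n = ⊤

/-- `E(M) = Ext^*_A(M,A_0)` is generated in degree `0` as a graded `E(A)`-module. -/
def ExtModGenInZero (RT : MinRes T) (RM : MinRes M)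
    (μ : ∀ i j : ℕ, ExtQ T RT i →ₗ[F] ExtQ T RM j →ₗ[F] ExtQ T RM (i + j)) : Prop :=
  ∀ W : (n : ℕ) → Submodule F (ExtQ T RM n),
    W 0 = ⊤ →
    (∀ (i j : ℕ) (x : ExtQ T RT i) (y : ExtQ T RM j),
      y ∈ W j → μ i j x y ∈ W (i + j)) →
    ∀ n, W n = ⊤

end Ext

/-- `JM` is (a graded module isomorphic to) the submodule `J·M` of `M`. -/
def IsJM (M JM : 𝒜.GMod) : Prop :=
  ∃ e : JM.M ≃ₗ[𝒜.A] ↥(𝒜.jideal • (⊤ : Submodule 𝒜.A M.M)),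
    ∀ (j : ℤ) (x : JM.M), x ∈ JM.grading j ↔ ((e x : M.M) ∈ M.grading j)

/-- `Q` is (a graded module isomorphic to) the quotient `M/JM`. -/
def IsQuotJM (M Q : 𝒜.GMod) : Prop :=
  ∃ e : Q.M ≃ₗ[𝒜.A] (M.M ⧸ (𝒜.jideal • (⊤ : Submodule 𝒜.A M.M))),
    ∀ j : ℤ, Q.grading j = Submodule.map
      ((e.symm.toLinearMap ∘ₗ (𝒜.jideal • (⊤ : Submodule 𝒜.A M.M)).mkQ).restrictScalars F)
      (M.grading j)

/-- `W` is (isomorphic to) the `n`-th syzygy `Ω^n(M)` of `M` in the minimal graded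
projective resolution `R`. -/
def IsSyzygy {M : 𝒜.GMod} (R : MinRes M) : ℕ → 𝒜.GMod → Prop
  | 0, W => ∃ e : W.M ≃ₗ[𝒜.A] M.M,
      ∀ (j : ℤ) (x : W.M), x ∈ W.grading j ↔ e x ∈ M.grading j
  | 1, W => ∃ e : W.M ≃ₗ[𝒜.A] ↥(LinearMap.ker R.aug.lin),
      ∀ (j : ℤ) (x : W.M), x ∈ W.grading j ↔ ((e x : (R.P 0).M) ∈ (R.P 0).grading j)
  | (n + 2), W => ∃ e : W.M ≃ₗ[𝒜.A] ↥(LinearMap.ker (R.d n).lin),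
      ∀ (j : ℤ) (x : W.M), x ∈ W.grading j ↔ ((e x : (R.P (n + 1)).M) ∈ (R.P (n + 1)).grading j)

end GradedAlg

namespace AInf

variable (F : Type) [Field F]

theorem mem_decomp_le {n : ℕ} {rs : ℕ × ℕ}
    (h : rs ∈ ((Finset.range (n + 1)) ×ˢ (Finset.Icc 1 n)).filter
      fun rs => rs.1 + rs.2 ≤ n) :
    rs.1 + rs.2 ≤ n := (Finset.mem_filter.mp h).2

theorem mem_decomp_one_le {n : ℕ} {rs : ℕ × ℕ}
    (h : rs ∈ ((Finset.range (n + 1)) ×ˢ (Finset.Icc 1 n)).filter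
      fun rs => rs.1 + rs.2 ≤ n) :
    1 ≤ rs.2 :=
  (Finset.mem_Icc.mp (Finset.mem_product.mp (Finset.mem_filter.mp h).1).2).1

/-- The tuple `(x_1, …, x_r, m_s(x_{r+1}, …, x_{r+s}), x_{r+s+1}, …, x_n)` appearing in
the Stasheff identity `SI(n)`. -/
def insertAt {V : Type} [AddCommGroup V] [Module F V]
    (m : (q : ℕ) → MultilinearMap F (fun _ : Fin q => V) V)
    (n r s : ℕ) (hrs : r + s ≤ n) (hs : 1 ≤ s) (x : Fin n → V) :
    Fin (r + 1 + (n - r - s)) → V := fun k =>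
  if hk : (k : ℕ) < r then x ⟨(k : ℕ), by omega⟩
  else if hk' : (k : ℕ) = r then
    m s (fun l => x ⟨r + (l : ℕ), by have := l.isLt; omega⟩)
  else x ⟨(k : ℕ) + s - 1, by have := k.isLt; omega⟩

/-- A (minimal, bigraded) `A_∞`-algebra over `F`: a bigraded vector space
`E = ⊕ E^n_j` (first degree the cohomological/ext degree, second degree the
shift degree) together with multilinear operations `m_q` of degree `(2 − q, 0)`
satisfying the Stasheff identities `SI(n)` (with Koszul signs) on homogeneous
elements, and with `m_1 = 0`. -/
structure BigradedAInfty where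
  V : Type
  [acg : AddCommGroup V]
  [modF : Module F V]
  comp : ℤ → ℤ → Submodule F V
  m : (q : ℕ) → MultilinearMap F (fun _ : Fin q => V) V
  m_one : m 1 = 0
  sup_comp : (⨆ n : ℤ, ⨆ j : ℤ, comp n j) = ⊤
  hom_degree : ∀ (q : ℕ), 1 ≤ q → ∀ (ι σ : Fin q → ℤ) (x : Fin q → V),
    (∀ t, x t ∈ comp (ι t) (σ t)) →
    m q x ∈ comp ((∑ t, ι t) + 2 - q) (∑ t, σ t)
  stasheff : ∀ (n : ℕ) (ι σ : Fin n → ℤ) (x : Fin n → V),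
    (∀ t, x t ∈ comp (ι t) (σ t)) →
    ∑ rs ∈ (((Finset.range (n + 1)) ×ˢ (Finset.Icc 1 n)).filter
        fun rs => rs.1 + rs.2 ≤ n).attach,
      (((Int.negOnePow ((rs.1.1 : ℤ) + (rs.1.2 : ℤ) * ((n - rs.1.1 - rs.1.2 : ℕ) : ℤ) +
          (rs.1.2 : ℤ) *
            ∑ t ∈ Finset.univ.filter (fun t : Fin n => (t : ℕ) < rs.1.1), ι t)) : ℤˣ) : ℤ) •
        m (rs.1.1 + 1 + (n - rs.1.1 - rs.1.2))
          (insertAt F m n rs.1.1 rs.1.2 (mem_decomp_le rs.2) (mem_decomp_one_le rs.2) x)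
      = 0

attribute [instance] BigradedAInfty.acg BigradedAInfty.modF

variable {F}

/-- The ext-degree-`n` component `E^n = ⊕_j E^n_j`. -/
def Edeg (S : BigradedAInfty F) (n : ℤ) : Submodule F S.V := ⨆ j : ℤ, S.comp n j

variable (F)

open GradedAlg in
/-- The bigraded `A_∞`-algebra `S` is an `A_∞`-structure *on the Koszul dual `E(A)`*:
its components vanish in negative ext-degrees and are identified with the bigraded Ext
groups `Ext^n_A(A_0,A_0)_j` in such a way that `m_2` is the Yoneda product `μ`. -/
structure AInftyOnExt {F : Type} [Field F] (𝒜 : GradedAlg F) (T : 𝒜.GMod)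
    (R : GradedAlg.MinRes T)
    (μ : ∀ i j : ℕ, ExtQ T R i →ₗ[F] ExtQ T R j →ₗ[F] ExtQ T R (i + j))
    (S : BigradedAInfty F) where
  comp_neg : ∀ n j : ℤ, n < 0 → S.comp n j = ⊥
  ψ : ∀ n : ℕ, ↥(Edeg S (n : ℤ)) ≃ₗ[F] ExtQ T R n
  ψ_comp : ∀ (n : ℕ) (j : ℤ),
    Submodule.map (ψ n).toLinearMap
        ((S.comp (n : ℤ) j).comap (Edeg S (n : ℤ)).subtype) = extComp T R n j
  ψ_mul : ∀ (i j : ℕ) (x y : S.V) (hx : x ∈ Edeg S (i : ℤ)) (hy : y ∈ Edeg S (j : ℤ))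
    (hm : S.m 2 ![x, y] ∈ Edeg S ((i + j : ℕ) : ℤ)),
    ψ (i + j) ⟨S.m 2 ![x, y], hm⟩ = μ i j (ψ i ⟨x, hx⟩) (ψ j ⟨y, hy⟩)

variable {F}

/-- `E` is generated by `E^1` as an `A_∞`-algebra: for every `n ≥ 2`,
`E^n = Σ_{i+j=n} m_2(E^i ⊗ E^j) + Σ m_q(E^{i_1} ⊗ ⋯ ⊗ E^{i_q})`, the sums running over
decompositions `i_1 + ⋯ + i_q + 2 − q = n` with all `i_t ≥ 1`. -/
def GeneratedByE1 (S : BigradedAInfty F) : Prop :=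
  ∀ n : ℤ, 2 ≤ n →
    Edeg S n = Submodule.span F
      {v : S.V | ∃ (q : ℕ) (ι : Fin q → ℤ) (x : Fin q → S.V),
        2 ≤ q ∧ (∀ t, 1 ≤ ι t ∧ x t ∈ Edeg S (ι t)) ∧
        ((∑ t, ι t) + 2 - q = n) ∧ v = S.m q x}

/-- A reduced `(2,l)`-algebra `E` is generated by `E^1`: for every `n ≥ 2`,
`E^n = Σ_{i+j=n, i,j≥1} m_2(E^i ⊗ E^j) + Σ m_l(E^{i_1} ⊗ ⋯ ⊗ E^{i_l})`, the second sum
over decompositions `i_1 + ⋯ + i_l + 2 − l = n` with all `i_t ≥ 1`. -/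
def ReducedGenByE1 (S : BigradedAInfty F) (l : ℕ) : Prop :=
  ∀ n : ℤ, 2 ≤ n →
    Edeg S n = Submodule.span F
      {v : S.V |
        (∃ (i j : ℤ) (x y : S.V), 1 ≤ i ∧ 1 ≤ j ∧ i + j = n ∧
          x ∈ Edeg S i ∧ y ∈ Edeg S j ∧ v = S.m 2 ![x, y]) ∨
        (∃ (ι : Fin l → ℤ) (x : Fin l → S.V),
          (∀ t, 1 ≤ ι t ∧ x t ∈ Edeg S (ι t)) ∧
          ((∑ t, ι t) + 2 - l = n) ∧ v = S.m l x)}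

end AInf


namespace GradedAlg

variable {F : Type} [Field F] {𝒜 : GradedAlg F}

theorem GMod.isInternal (M : 𝒜.GMod) : DirectSum.IsInternal M.grading :=
  DirectSum.isInternal_submodule_of_iSupIndep_of_iSup_eq_top M.indep M.sup_eq_top

/-- The degree `j` projection. -/
def GMod.pr (M : 𝒜.GMod) (j : ℤ) : M.M →ₗ[F] M.M :=
  (M.grading j).subtype ∘ₗ DirectSum.component F ℤ (fun i => M.grading i) j ∘ₗ
    (LinearEquiv.ofBijective (DirectSum.coeLinearMap M.grading) M.isInternal).symm.toLinearMap

theorem GMod.pr_mem (M : 𝒜.GMod) (j : ℤ) (x : M.M) : M.pr j x ∈ M.grading j := by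
  simp [GMod.pr]

theorem GMod.symm_of (M : 𝒜.GMod) {i : ℤ} {x : M.M} (hx : x ∈ M.grading i) :
    (LinearEquiv.ofBijective (DirectSum.coeLinearMap M.grading) M.isInternal).symm x
      = DirectSum.lof F ℤ (fun i => M.grading i) i ⟨x, hx⟩ := by
  rw [LinearEquiv.symm_apply_eq]
  exact (DirectSum.coeLinearMap_lof M.grading i ⟨x, hx⟩).symm

theorem GMod.pr_same (M : 𝒜.GMod) {j : ℤ} {x : M.M} (hx : x ∈ M.grading j) :
    M.pr j x = x := by
  simp only [GMod.pr, LinearMap.comp_apply, LinearEquiv.coe_coe]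
  rw [M.symm_of hx]
  simp [DirectSum.component.lof_self]

theorem GMod.pr_ne (M : 𝒜.GMod) {i j : ℤ} (hij : i ≠ j) {x : M.M} (hx : x ∈ M.grading i) :
    M.pr j x = 0 := by
  simp only [GMod.pr, LinearMap.comp_apply, LinearEquiv.coe_coe]
  rw [M.symm_of hx]
  rw [DirectSum.component.of, dif_neg hij]
  simp

/-- Induction over homogeneous elements of a module. -/
theorem GMod.hom_induction (M : 𝒜.GMod) {p : M.M → Prop}
    (hh : ∀ i, ∀ x ∈ M.grading i, p x) (h0 : p 0) (ha : ∀ x y, p x → p y → p (x + y))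
    (x : M.M) : p x := by
  have hx : x ∈ (⨆ j : ℤ, M.grading j) := by rw [M.sup_eq_top]; trivial
  exact Submodule.iSup_induction M.grading (motive := p) hx hh h0 ha

/-- Induction over homogeneous elements of the algebra. -/
theorem alg_induction {p : 𝒜.A → Prop}
    (hh : ∀ i, ∀ x ∈ 𝒜.grading i, p x) (h0 : p 0) (ha : ∀ x y, p x → p y → p (x + y))
    (x : 𝒜.A) : p x := by
  classical
  exact DirectSum.Decomposition.inductionOn 𝒜.grading h0 (fun m => hh _ _ m.2) ha x

theorem GMod.pr_smul (M : 𝒜.GMod) {m : ℕ} {a : 𝒜.A} (ha : a ∈ 𝒜.grading m) (i : ℤ) (x : M.M) :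
    M.pr i (a • x) = a • M.pr (i - m) x := by
  induction x using M.hom_induction with
  | hh j x hx =>
    by_cases h : j = i - m
    · subst h
      rw [M.pr_same hx]
      apply M.pr_same
      have := M.smul_mem ha hx
      rwa [show (m : ℤ) + (i - m) = i by ring] at this
    · rw [M.pr_ne h hx, smul_zero]
      exact M.pr_ne (by omega) (M.smul_mem ha hx)
  | h0 => simp
  | ha x y hx hy => simp [smul_add, hx, hy]

theorem GHom.pr_comm {M N : 𝒜.GMod} (f : GHom M N) (i : ℤ) (x : M.M) :
    f.lin (M.pr i x) = N.pr i (f.lin x) := by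
  induction x using M.hom_induction with
  | hh j x hx =>
    by_cases h : j = i
    · subst h
      rw [M.pr_same hx, N.pr_same (f.grad _ _ hx)]
    · rw [M.pr_ne h hx, N.pr_ne h (f.grad _ _ hx), map_zero]
  | h0 => simp
  | ha x y hx hy => simp [hx, hy]

/-- Degree-zero part of a linear map. -/
theorem exists_degZero {M N : 𝒜.GMod} (ψ : M.M →ₗ[𝒜.A] N.M) :
    ∃ g : GHom M N, ∀ i, ∀ x ∈ M.grading i, g.lin x = N.pr i (ψ x) := by
  classical
  let L : M.M →ₗ[F] N.M :=
    (DirectSum.toModule F ℤ N.M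
      (fun j => N.pr j ∘ₗ (ψ.restrictScalars F) ∘ₗ (M.grading j).subtype)) ∘ₗ
    (LinearEquiv.ofBijective (DirectSum.coeLinearMap M.grading) M.isInternal).symm.toLinearMap
  have hL : ∀ i, ∀ x ∈ M.grading i, L x = N.pr i (ψ x) := by
    intro i x hx
    simp only [L, LinearMap.comp_apply, LinearEquiv.coe_coe]
    rw [M.symm_of hx, DirectSum.toModule_lof]
    simp
  have hs : ∀ (a : 𝒜.A) (x : M.M), L (a • x) = a • L x := by
    intro a x
    induction a using alg_induction with
    | hh m a ha =>
      induction x using M.hom_induction with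
      | hh j x hx =>
        rw [hL _ _ hx, hL _ _ (M.smul_mem ha hx), map_smul, N.pr_smul ha]
        simp
      | h0 => simp
      | ha x y hx hy => simp [hx, hy]
    | h0 => simp
    | ha a b ha hb => simp [add_smul, ha, hb]
  refine ⟨⟨⟨⟨L, fun x y => map_add L x y⟩, hs⟩, ?_⟩, hL⟩
  intro j x hx
  change L x ∈ _
  rw [hL _ _ hx]
  exact N.pr_mem _ _

theorem mem_jideal_of_pos {m : ℕ} (hm : 1 ≤ m) {a : 𝒜.A} (ha : a ∈ 𝒜.grading m) :
    a ∈ 𝒜.jideal := by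
  change a ∈ HomogeneousIdeal.irrelevant 𝒜.grading
  rw [HomogeneousIdeal.mem_irrelevant_iff, GradedRing.proj_apply]
  exact DirectSum.decompose_of_mem_ne _ ha (by omega)

theorem mem_jideal_iff (a : 𝒜.A) : a ∈ 𝒜.jideal ↔ GradedRing.proj 𝒜.grading 0 a = 0 :=
  HomogeneousIdeal.mem_irrelevant_iff _ _

theorem jideal_mul_right {a : 𝒜.A} (b : 𝒜.A) (ha : a ∈ 𝒜.jideal) : a * b ∈ 𝒜.jideal := by
  have h : ∀ x, GradedRing.proj 𝒜.grading 0 x = GradedRing.projZeroRingHom 𝒜.grading x := by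
    intro x
    simp [GradedRing.proj_apply]
  rw [mem_jideal_iff, h] at *
  rw [map_mul, ha, zero_mul]

theorem exists_scalar (h0 : 𝒜.grading 0 = Submodule.span F {1}) (a : 𝒜.A) :
    ∃ c : F, a - c • (1 : 𝒜.A) ∈ 𝒜.jideal := by
  have h : GradedRing.proj 𝒜.grading 0 a ∈ 𝒜.grading 0 := by
    rw [GradedRing.proj_apply]; exact SetLike.coe_mem _
  rw [h0, Submodule.mem_span_singleton] at h
  obtain ⟨c, hc⟩ := h
  refine ⟨c, ?_⟩
  rw [mem_jideal_iff, hc, map_sub, sub_eq_zero]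
  simp [GradedRing.proj_apply]

theorem one_not_mem_jideal [Nontrivial 𝒜.A] : (1 : 𝒜.A) ∉ 𝒜.jideal := by
  rw [mem_jideal_iff, GradedRing.proj_apply,
    DirectSum.decompose_of_mem_same _ SetLike.GradedOne.one_mem]
  exact one_ne_zero

theorem IsTrivialGMod.smul_zero {T : 𝒜.GMod} (hT : IsTrivialGMod T) {a : 𝒜.A}
    (ha : a ∈ 𝒜.jideal) (t : T.M) : a • t = 0 := by
  obtain ⟨_, ⟨e⟩⟩ := hT
  apply e.injective
  rw [map_smul, map_zero]
  obtain ⟨b, hb⟩ := Submodule.Quotient.mk_surjective _ (e t)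
  rw [← hb, ← Submodule.Quotient.mk_smul, Submodule.Quotient.mk_eq_zero]
  exact jideal_mul_right b ha

theorem IsTrivialGMod.map_zero {T : 𝒜.GMod} (hT : IsTrivialGMod T) {M : 𝒜.GMod}
    (f : M.M →ₗ[𝒜.A] T.M) {x : M.M} (hx : x ∈ 𝒜.jideal • (⊤ : Submodule 𝒜.A M.M)) :
    f x = 0 := by
  induction hx using Submodule.smul_induction_on' with
  | smul a ha y hy => rw [map_smul, hT.smul_zero ha]
  | add x hx y hy h1 h2 => rw [map_add, h1, h2, add_zero]

theorem map_mem_J {M N : 𝒜.GMod} (f : M.M →ₗ[𝒜.A] N.M) {x : M.M}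
    (hx : x ∈ 𝒜.jideal • (⊤ : Submodule 𝒜.A M.M)) :
    f x ∈ 𝒜.jideal • (⊤ : Submodule 𝒜.A N.M) := by
  have := Submodule.mem_map_of_mem (f := f) hx
  rw [Submodule.map_smul''] at this
  exact Submodule.smul_mono le_rfl le_top this

/-- All elements of `M` of degree different from `j` lie in `J M`. -/
def TopDeg (M : 𝒜.GMod) (j : ℤ) : Prop :=
  ∀ i : ℤ, i ≠ j → ∀ x ∈ M.grading i, x ∈ 𝒜.jideal • (⊤ : Submodule 𝒜.A M.M)

theorem extComp_of_topDeg {T : 𝒜.GMod} (hT : IsTrivialGMod T) (R : MinRes T) (n : ℕ) (j : ℤ)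
    (h : TopDeg (R.P n) j) : extComp T R n j = ⊤ := by
  rw [eq_top_iff]
  rintro y -
  obtain ⟨⟨f, hf⟩, rfl⟩ := Submodule.Quotient.mk_surjective _ y
  refine ⟨⟨f, hf⟩, ?_, rfl⟩
  intro i hi x hx
  exact hT.map_zero f (h i hi x hx)

theorem all_cocyc {T : 𝒜.GMod} (hT : IsTrivialGMod T) (R : MinRes T) (n : ℕ)
    (f : HomSp T R n) : f ∈ cocyc T R n := by
  change precompF T (R.d n).lin f = 0
  ext x
  exact hT.map_zero f (R.minimal n ⟨x, rfl⟩)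

theorem cobound_zero {T : 𝒜.GMod} (hT : IsTrivialGMod T) (R : MinRes T) (n : ℕ)
    (f : HomSp T R n) (hf : f ∈ cobound T R n) : f = 0 := by
  cases n with
  | zero => exact hf
  | succ n =>
    obtain ⟨g, rfl⟩ := hf
    exact all_cocyc hT R n g

theorem topDeg_of_extComp (h0 : 𝒜.grading 0 = Submodule.span F {1})
    {T : 𝒜.GMod} (hT : IsTrivialGMod T) (R : MinRes T) (n : ℕ) (j : ℤ)
    (h : extComp T R n j = ⊤) : TopDeg (R.P n) j := by
  intro i hi x hx
  by_contra hxJ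
  rcases subsingleton_or_nontrivial 𝒜.A with hA | hA
  · have : Subsingleton (R.P n).M := Module.subsingleton 𝒜.A _
    apply hxJ
    rw [Subsingleton.elim x 0]
    exact Submodule.zero_mem _
  have hf0 : ∀ f : HomSp T R n, f x = 0 := by
    intro f
    have : extCls T (all_cocyc hT R n f) ∈ extComp T R n j := by rw [h]; trivial
    obtain ⟨⟨g, hg⟩, hgd, hgf⟩ := this
    have h2 : g - f ∈ cobound T R n := (Submodule.Quotient.eq (extRel T R n)).1 hgf
    have h3 := sub_eq_zero.1 (cobound_zero hT R n _ h2)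
    rw [← h3]
    exact hgd i hi x hx
  obtain ⟨hT0, ⟨e⟩⟩ := id hT
  set t : T.M := e.symm (Submodule.Quotient.mk 1) with ht
  have ht0 : t ≠ 0 := by
    intro h
    rw [ht, LinearEquiv.map_eq_zero_iff, Submodule.Quotient.mk_eq_zero] at h
    exact one_not_mem_jideal h
  let JP : Submodule F (R.P n).M :=
    (𝒜.jideal • (⊤ : Submodule 𝒜.A (R.P n).M)).restrictScalars F
  obtain ⟨g, hg1, hg2⟩ := Submodule.exists_le_ker_of_notMem (p := JP) (v := x) hxJ
  have hgJ : ∀ a ∈ 𝒜.jideal, ∀ y, g (a • y) = 0 := fun a ha y =>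
    hg2 (Submodule.smul_mem_smul ha trivial : a • y ∈ 𝒜.jideal • (⊤ : Submodule 𝒜.A (R.P n).M))
  let f : HomSp T R n :=
    { toFun := fun y => g y • t
      map_add' := fun y z => by rw [map_add, add_smul]
      map_smul' := fun a y => by
        obtain ⟨c, hc⟩ := exists_scalar h0 a
        obtain ⟨b, hb⟩ : ∃ b, b = a - c • (1 : 𝒜.A) := ⟨_, rfl⟩
        rw [← hb] at hc
        have ha : a = c • (1 : 𝒜.A) + b := by rw [hb]; abel
        rw [ha, add_smul, map_add, hgJ b hc, RingHom.id_apply, add_smul (c • (1 : 𝒜.A)) b,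
          hT.smul_zero hc]
        simp [mul_smul] }
  have := hf0 f
  change g x • t = 0 at this
  rw [smul_eq_zero] at this
  tauto

end GradedAlg

namespace GradedAlg

variable {F : Type} [Field F] {𝒜 : GradedAlg F}

/-- Homogeneous components of elements of `J M`. -/
theorem pr_mem_of_mem_J (M : 𝒜.GMod) (i : ℤ) {x : M.M}
    (hx : x ∈ 𝒜.jideal • (⊤ : Submodule 𝒜.A M.M)) :
    M.pr i x ∈ Submodule.span F
      {y : M.M | ∃ (m : ℕ) (a : 𝒜.A) (p : M.M), 1 ≤ m ∧ a ∈ 𝒜.grading m ∧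
        p ∈ M.grading (i - m) ∧ y = a • p} := by
  classical
  induction hx using Submodule.smul_induction_on' with
  | smul a ha y hy =>
    rw [← DirectSum.sum_support_decompose 𝒜.grading a, Finset.sum_smul, map_sum]
    refine Submodule.sum_mem _ fun m hm => ?_
    rw [M.pr_smul (SetLike.coe_mem _)]
    refine Submodule.subset_span ⟨m, _, _, ?_, SetLike.coe_mem _, M.pr_mem _ _, rfl⟩
    by_contra hm0
    obtain rfl : m = 0 := by omega
    rw [mem_jideal_iff, GradedRing.proj_apply] at ha
    rw [DFinsupp.mem_support_iff] at hm
    exact hm (Subtype.ext ha)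
  | add x hx y hy h1 h2 => rw [map_add]; exact Submodule.add_mem _ h1 h2

/-- Homogeneous components of a module generated in degree `0`. -/
theorem pr_mem_of_genInDeg (M : 𝒜.GMod) (h : M.GenInDeg 0) (i : ℤ) (x : M.M) :
    M.pr i x ∈ Submodule.span F
      {y : M.M | ∃ (m : ℕ) (a : 𝒜.A) (p : M.M), (m : ℤ) = i ∧ a ∈ 𝒜.grading m ∧
        p ∈ M.grading 0 ∧ y = a • p} := by
  classical
  have hx : x ∈ Submodule.span 𝒜.A (M.grading 0 : Set M.M) := by rw [h]; trivial
  induction hx using Submodule.span_induction generalizing i with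
  | mem y hy =>
    by_cases hi : 0 = i
    · subst hi
      rw [M.pr_same hy]
      exact Submodule.subset_span ⟨0, 1, y, by simp, SetLike.GradedOne.one_mem, hy, by simp⟩
    · rw [M.pr_ne hi hy]; exact Submodule.zero_mem _
  | zero => simp
  | add x y _ _ h1 h2 => rw [map_add]; exact Submodule.add_mem _ (h1 i) (h2 i)
  | smul a y _ ih =>
    rw [← DirectSum.sum_support_decompose 𝒜.grading a, Finset.sum_smul, map_sum]
    refine Submodule.sum_mem _ fun m hm => ?_
    rw [M.pr_smul (SetLike.coe_mem _)]
    have := ih (i - m)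
    generalize (M.pr (i - m)) y = w at this ⊢
    induction this using Submodule.span_induction with
    | mem z hz =>
      obtain ⟨m', b, p, h1, h2, h3, rfl⟩ := hz
      refine Submodule.subset_span ⟨m + m', _ * b, p, by push_cast; omega,
        SetLike.GradedMul.mul_mem (SetLike.coe_mem _) h2, h3, (mul_smul _ _ _).symm⟩
    | zero => simp
    | add x y _ _ h1 h2 => rw [smul_add]; exact Submodule.add_mem _ h1 h2
    | smul c x _ h1 => rw [smul_comm]; exact Submodule.smul_mem _ _ h1

/-- Finitely generated graded modules are bounded below. -/
theorem bounded_below (M : 𝒜.GMod) [hM : Module.Finite 𝒜.A M.M] :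
    ∃ B : ℤ, ∀ i < B, ∀ x ∈ M.grading i, x = 0 := by
  classical
  let U : ℤ → Submodule 𝒜.A M.M := fun B =>
    { carrier := {x | ∀ i < B, M.pr i x = 0}
      add_mem' := fun hx hy i hi => by rw [map_add, hx i hi, hy i hi, add_zero]
      zero_mem' := fun i hi => map_zero _
      smul_mem' := fun a x hx i hi => by
        induction a using alg_induction with
        | hh m a ha => rw [M.pr_smul ha, hx _ (by omega), smul_zero]
        | h0 => simp
        | ha a b h1 h2 => rw [add_smul, map_add, h1, h2, add_zero] }
  have hanti : ∀ B B', B ≤ B' → U B' ≤ U B := fun B B' h x hx i hi => hx i (by omega)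
  have hex : ∀ x, ∃ B, x ∈ U B := by
    intro x
    induction x using M.hom_induction with
    | hh i x hx => exact ⟨i, fun j hj => M.pr_ne (by omega) hx⟩
    | h0 => exact ⟨0, Submodule.zero_mem _⟩
    | ha x y hx hy =>
      obtain ⟨B, hB⟩ := hx
      obtain ⟨B', hB'⟩ := hy
      exact ⟨min B B', Submodule.add_mem _ (hanti _ _ (min_le_left _ _) hB)
        (hanti _ _ (min_le_right _ _) hB')⟩
  obtain ⟨s, hs⟩ := hM.fg_top
  have : ∃ B, ∀ x ∈ s, x ∈ U B := by
    clear hs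
    induction s using Finset.induction_on with
    | empty => exact ⟨0, by simp⟩
    | insert x s hx ih =>
      obtain ⟨B, hB⟩ := ih
      obtain ⟨B', hB'⟩ := hex x
      refine ⟨min B B', fun y hy => ?_⟩
      rcases Finset.mem_insert.1 hy with rfl | hy
      · exact hanti _ _ (min_le_right _ _) hB'
      · exact hanti _ _ (min_le_left _ _) (hB y hy)
  obtain ⟨B, hB⟩ := this
  refine ⟨B, fun i hi x hx => ?_⟩
  have hx' : x ∈ Submodule.span 𝒜.A (s : Set M.M) := by rw [hs]; trivial
  have := (Submodule.span_le.2 hB) hx' i hi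
  rwa [M.pr_same hx] at this

theorem genInDeg_of_topDeg (M : 𝒜.GMod) [Module.Finite 𝒜.A M.M] (j : ℤ)
    (h : TopDeg M j) : M.GenInDeg j := by
  obtain ⟨B, hB⟩ := bounded_below M
  have key : ∀ k : ℕ, ∀ i < B + k, ∀ x ∈ M.grading i,
      x ∈ Submodule.span 𝒜.A (M.grading j : Set M.M) := by
    intro k
    induction k with
    | zero =>
      intro i hi x hx
      rw [hB i (by omega) x hx]
      exact Submodule.zero_mem _
    | succ k ih =>
      intro i hi x hx
      by_cases hij : i = j
      · subst hij; exact Submodule.subset_span hx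
      have h1 := pr_mem_of_mem_J M i (h i hij x hx)
      rw [M.pr_same hx] at h1
      refine (Submodule.span_le (p := (Submodule.span 𝒜.A
        (M.grading j : Set M.M)).restrictScalars F)).2 ?_ h1
      rintro y ⟨m, a, p, hm, ha, hp, rfl⟩
      exact Submodule.smul_mem _ _ (ih (i - m) (by push_cast at hi; omega) p hp)
  rw [GMod.GenInDeg, eq_top_iff]
  rintro x -
  induction x using M.hom_induction with
  | hh i x hx => exact key (i - B + 1).toNat i (by omega) x hx
  | h0 => exact Submodule.zero_mem _
  | ha x y hx hy => exact Submodule.add_mem _ hx hy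

theorem topDeg_zero {T : 𝒜.GMod} (hT : IsTrivialGMod T) (R : MinRes T) :
    TopDeg (R.P 0) 0 := by
  intro i hi x hx
  apply R.minimal 0
  rw [R.exact_aug, LinearMap.mem_ker]
  have := R.aug.grad i x hx
  rw [hT.1 i hi] at this
  simpa using this

theorem topDeg_one (hA : 𝒜.Standing) {T : 𝒜.GMod} (hT : IsTrivialGMod T) (R : MinRes T) :
    TopDeg (R.P 1) 1 := by
  intro i hi x hx
  have := R.fg 0
  have hg := genInDeg_of_topDeg _ _ (topDeg_zero hT R)
  have hdx := (R.d 0).grad i x hx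
  have hneg : ∀ i < 0, ∀ y ∈ (R.P 0).grading i, y = 0 := by
    intro i hi y hy
    have h := pr_mem_of_genInDeg _ hg i y
    rw [(R.P 0).pr_same hy] at h
    refine (Submodule.span_le (p := (⊥ : Submodule F (R.P 0).M))).2 ?_ h
    rintro z ⟨m, a, p, hm, ha, hp, rfl⟩
    omega
  have hred : ∀ y ∈ 𝒜.jideal • (⊤ : Submodule 𝒜.A (R.P 1).M), (R.d 0).lin x = (R.d 0).lin y →
      x ∈ 𝒜.jideal • (⊤ : Submodule 𝒜.A (R.P 1).M) := by
    intro y hy hxy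
    have h1 : x - y ∈ 𝒜.jideal • (⊤ : Submodule 𝒜.A (R.P 1).M) := by
      apply R.minimal 1
      rw [R.exact 0, LinearMap.mem_ker, map_sub, hxy, sub_self]
    simpa using Submodule.add_mem _ h1 hy
  rcases lt_or_ge i 1 with hi1 | hi1
  · refine hred 0 (Submodule.zero_mem _) ?_
    rw [map_zero]
    have h := pr_mem_of_mem_J _ i (R.minimal 0 ⟨x, rfl⟩)
    rw [(R.P 0).pr_same hdx] at h
    refine (Submodule.span_le (p := (⊥ : Submodule F (R.P 0).M))).2 ?_ h
    rintro z ⟨m, a, p, hm, ha, hp, rfl⟩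
    rw [hneg _ (by omega) p hp, _root_.smul_zero]
    exact Submodule.zero_mem _
  · have h := pr_mem_of_genInDeg _ hg i ((R.d 0).lin x)
    rw [(R.P 0).pr_same hdx] at h
    let Q : Submodule F (R.P 0).M :=
      ((𝒜.jideal • (⊤ : Submodule 𝒜.A (R.P 1).M)).map (R.d 0).lin).restrictScalars F
    have hQ : (R.d 0).lin x ∈ Q := by
      refine (Submodule.span_le (p := Q)).2 ?_ h
      rintro z ⟨m, a, p, hm, ha, hp, rfl⟩
      rw [show m = (m - 1) + 1 by omega, ← hA.gen01] at ha
      induction ha using Submodule.mul_induction_on' with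
      | mem_mul_mem b hb c hc =>
        have hcp : c • p ∈ LinearMap.range (R.d 0).lin := by
          rw [R.exact_aug, LinearMap.mem_ker]
          have := R.aug.grad _ _ ((R.P 0).smul_mem hc hp)
          rw [hT.1 _ (by simp)] at this
          simpa using this
        obtain ⟨y, hy⟩ := hcp
        refine ⟨b • y, Submodule.smul_mem_smul (mem_jideal_of_pos (by omega) hb) trivial, ?_⟩
        rw [map_smul, hy, mul_smul]
      | add a _ b _ h1 h2 => rw [add_smul]; exact Submodule.add_mem _ h1 h2
    obtain ⟨y, hy, hxy⟩ := hQ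
    exact hred y hy hxy.symm

theorem exists_lift {A P N M : Type} [Ring A] [AddCommGroup P] [AddCommGroup N] [AddCommGroup M]
    [Module A P] [Module A N] [Module A M] (hP : Module.Projective A P)
    (f : N →ₗ[A] M) (g : P →ₗ[A] M) (h : LinearMap.range g ≤ LinearMap.range f) :
    ∃ k : P →ₗ[A] N, ∀ x, f (k x) = g x := by
  obtain ⟨k, hk⟩ := Module.projective_lifting_property f.rangeRestrict
    (g.codRestrict (LinearMap.range f) (fun x => h ⟨x, rfl⟩)) f.surjective_rangeRestrict
  refine ⟨k, fun x => ?_⟩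
  have := congrArg Subtype.val (LinearMap.congr_fun hk x)
  simpa using this

theorem exists_graded_lift {P N M : 𝒜.GMod} (hP : Module.Projective 𝒜.A P.M)
    (f : GHom N M) (g : GHom P M) (h : LinearMap.range g.lin ≤ LinearMap.range f.lin) :
    ∃ k : GHom P N, ∀ x, f.lin (k.lin x) = g.lin x := by
  obtain ⟨k, hk⟩ := exists_lift hP f.lin g.lin h
  obtain ⟨k', hk'⟩ := exists_degZero k
  refine ⟨k', fun x => ?_⟩
  induction x using P.hom_induction with
  | hh i x hx =>
    rw [hk' i x hx, f.pr_comm, hk, M.pr_same (g.grad i x hx)]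
  | h0 => simp
  | ha x y hx hy => simp [hx, hy]

/-- Composition of graded homomorphisms. -/
def GHom.comp {M N K : 𝒜.GMod} (g : GHom N K) (f : GHom M N) : GHom M K where
  lin := g.lin ∘ₗ f.lin
  grad j x hx := g.grad j _ (f.grad j x hx)

/-- Cycles of a resolution. -/
def cyc {T : 𝒜.GMod} (R : MinRes T) : (n : ℕ) → Submodule 𝒜.A (R.P n).M
  | 0 => LinearMap.ker R.aug.lin
  | n + 1 => LinearMap.ker (R.d n).lin

theorem range_eq_cyc {T : 𝒜.GMod} (R : MinRes T) (n : ℕ) :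
    LinearMap.range (R.d n).lin = cyc R n := by
  cases n with
  | zero => exact R.exact_aug
  | succ n => exact R.exact n

theorem comparison {T : 𝒜.GMod} (R R' : MinRes T) (n : ℕ) :
    ∃ (ψ : GHom (R'.P n) (R.P n)) (φ : (R.P n).M →ₗ[𝒜.A] (R'.P n).M)
      (h : (R'.P n).M →ₗ[𝒜.A] (R'.P (n + 1)).M),
      (∀ z ∈ cyc R' n, ψ.lin z ∈ cyc R n) ∧ (∀ z ∈ cyc R n, φ z ∈ cyc R' n) ∧
      (∀ z ∈ cyc R' n, φ (ψ.lin z) - z = (R'.d n).lin (h z)) ∧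
      ∀ x, φ (ψ.lin x) - x ∈ 𝒜.jideal • (⊤ : Submodule 𝒜.A (R'.P n).M) := by
  induction n with
  | zero =>
    obtain ⟨ψ, hψ⟩ := exists_graded_lift (R'.projective 0) R.aug R'.aug
      (by rw [LinearMap.range_eq_top.2 R.aug_surj]; exact le_top)
    obtain ⟨φ, hφ⟩ := exists_lift (R.projective 0) R'.aug.lin R.aug.lin
      (by rw [LinearMap.range_eq_top.2 R'.aug_surj]; exact le_top)
    obtain ⟨h, hh⟩ := exists_lift (R'.projective 0) (R'.d 0).lin (φ ∘ₗ ψ.lin - LinearMap.id)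
      (by
        rw [R'.exact_aug]
        rintro _ ⟨x, rfl⟩
        simp [hφ, hψ])
    refine ⟨ψ, φ, h, ?_, ?_, ?_, ?_⟩
    · intro z hz
      change R.aug.lin _ = 0
      rw [hψ]; exact hz
    · intro z hz
      change R'.aug.lin _ = 0
      rw [hφ]; exact hz
    · intro z _
      simp [hh]
    · intro x
      exact R'.minimal 0 ⟨h x, by simp [hh]⟩
  | succ n ih =>
    obtain ⟨ψ₀, φ₀, h₀, h1, h2, h3, h4⟩ := ih
    obtain ⟨ψ, hψ⟩ := exists_graded_lift (R'.projective (n + 1)) (R.d n) (ψ₀.comp (R'.d n))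
      (by
        rw [range_eq_cyc]
        rintro _ ⟨x, rfl⟩
        apply h1
        rw [← range_eq_cyc]
        exact ⟨x, rfl⟩)
    obtain ⟨φ, hφ⟩ := exists_lift (R.projective (n + 1)) (R'.d n).lin (φ₀ ∘ₗ (R.d n).lin)
      (by
        rw [range_eq_cyc]
        rintro _ ⟨x, rfl⟩
        apply h2
        rw [← range_eq_cyc]
        exact ⟨x, rfl⟩)
    replace hψ : ∀ x, (R.d n).lin (ψ.lin x) = ψ₀.lin ((R'.d n).lin x) := hψ
    replace hφ : ∀ x, (R'.d n).lin (φ x) = φ₀ ((R.d n).lin x) := hφ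
    obtain ⟨h, hh⟩ := exists_lift (R'.projective (n + 1)) (R'.d (n + 1)).lin
      (φ ∘ₗ ψ.lin - LinearMap.id - h₀ ∘ₗ (R'.d n).lin)
      (by
        rw [R'.exact]
        rintro _ ⟨x, rfl⟩
        have := h3 ((R'.d n).lin x) (by rw [← range_eq_cyc]; exact ⟨x, rfl⟩)
        simp [hφ, hψ, ← this])
    replace hh : ∀ x, (R'.d (n + 1)).lin (h x) = φ (ψ.lin x) - x - h₀ ((R'.d n).lin x) := hh
    refine ⟨ψ, φ, h, ?_, ?_, ?_, ?_⟩
    · intro z hz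
      change (R.d n).lin _ = 0
      rw [hψ, show (R'.d n).lin z = 0 from hz, map_zero]
    · intro z hz
      change (R'.d n).lin _ = 0
      rw [hφ, show (R.d n).lin z = 0 from hz, map_zero]
    · intro z hz
      rw [hh, show (R'.d n).lin z = 0 from hz, map_zero, sub_zero]
    · intro x
      have e : φ (ψ.lin x) - x = (R'.d (n + 1)).lin (h x) + h₀ ((R'.d n).lin x) := by
        rw [hh]; abel
      rw [e]
      exact Submodule.add_mem _ (R'.minimal (n + 1) ⟨h x, rfl⟩)
        (map_mem_J h₀ (R'.minimal n ⟨x, rfl⟩))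

theorem topDeg_transfer {T : 𝒜.GMod} (R R' : MinRes T) (n : ℕ) (j : ℤ)
    (h : TopDeg (R.P n) j) : TopDeg (R'.P n) j := by
  obtain ⟨ψ, φ, -, -, -, -, h4⟩ := comparison R R' n
  intro i hi x hx
  have h5 := map_mem_J φ (h i hi _ (ψ.grad i x hx))
  simpa using Submodule.sub_mem _ h5 (h4 x)

end GradedAlg

theorem jump_three (d n : ℕ) : ((jump d 3 n : ℕ) : ℤ) = (n : ℤ) / 3 * d + (n : ℤ) % 3 := by
  have : (n - n % 3) / 3 = n / 3 := by omega
  simp [jump, this]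

open GradedAlg AInf in
theorem edeg_le_comp {F : Type} [Field F] (d : ℕ) (hd : 3 < d) (S : BigradedAInfty F)
    (b0 : Edeg S 0 ≤ S.comp 0 0) (b1 : Edeg S 1 ≤ S.comp 1 1)
    (hred2 : ∀ k₁ k₂ s₁ s₂ : ℕ, (s₁ = 1 ∨ s₁ = 2) → (s₂ = 1 ∨ s₂ = 2) →
      3 ≤ s₁ + s₂ → s₁ + s₂ ≤ 4 →
      ∀ x y : S.V, x ∈ Edeg S ((3 * k₁ + s₁ : ℕ) : ℤ) →
        y ∈ Edeg S ((3 * k₂ + s₂ : ℕ) : ℤ) → S.m 2 ![x, y] = 0)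
    (hred3 : ∀ (ι : Fin (d - 1) → ℤ) (x : Fin (d - 1) → S.V),
      (∀ t, x t ∈ Edeg S (ι t)) →
      (¬ ∃ t₀ : Fin (d - 1), ι t₀ % 3 = 2 ∧ ∀ t, t ≠ t₀ → ι t % 3 = 1) →
      S.m (d - 1) x = 0)
    (hgen : ReducedGenByE1 S (d - 1)) (n : ℕ) :
    ∀ z : ℤ, z = n → Edeg S z ≤ S.comp z (z / 3 * d + z % 3) := by
  induction n using Nat.strong_induction_on with
  | _ n ih =>
  intro z hz
  rcases Nat.lt_or_ge n 2 with hn | hn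
  · obtain rfl | rfl : n = 0 ∨ n = 1 := by omega
    · subst hz; simpa using b0
    · subst hz; simpa using b1
  have ih' : ∀ w : ℤ, 0 ≤ w → w < z → Edeg S w ≤ S.comp w (w / 3 * d + w % 3) :=
    fun w h1 h2 => ih w.toNat (by omega) w (by omega)
  rw [hgen z (by omega), Submodule.span_le]
  rintro v (⟨i, j, x, y, hi, hj, hij, hx, hy, rfl⟩ | ⟨ι, x, hι, hsum, rfl⟩)
  · by_cases hc : i % 3 = 0 ∨ j % 3 = 0 ∨ (i % 3 = 1 ∧ j % 3 = 1)
    · have hm := S.hom_degree 2 (by norm_num) ![i, j]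
        ![i / 3 * d + i % 3, j / 3 * d + j % 3] ![x, y] (by
          intro t
          fin_cases t
          · exact ih' i (by omega) (by omega) hx
          · exact ih' j (by omega) (by omega) hy)
      simp only [Fin.sum_univ_two, Matrix.cons_val_zero, Matrix.cons_val_one] at hm
      have e1 : i + j + 2 - ((2 : ℕ) : ℤ) = z := by push_cast; omega
      have e2 : z / 3 = i / 3 + j / 3 := by omega
      have e3 : z % 3 = i % 3 + j % 3 := by omega
      have e4 : (i / 3 * d + i % 3) + (j / 3 * d + j % 3) = z / 3 * (d : ℤ) + z % 3 := by
        rw [e2, e3]; ring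
      rw [e1, e4] at hm
      exact hm
    · have : S.m 2 ![x, y] = 0 := by
        refine hred2 (i / 3).toNat (j / 3).toNat (i % 3).toNat (j % 3).toNat
          (by omega) (by omega) (by omega) (by omega) x y ?_ ?_
        · convert hx using 2; omega
        · convert hy using 2; omega
      rw [this]
      exact Submodule.zero_mem _
  · by_cases hc : ∃ t₀ : Fin (d - 1), ι t₀ % 3 = 2 ∧ ∀ t, t ≠ t₀ → ι t % 3 = 1
    · have hlt : ∀ t, ι t < z := by
        intro t
        have h1 : ∑ s ∈ Finset.univ.erase t, (1 : ℤ) ≤ ∑ s ∈ Finset.univ.erase t, ι s :=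
          Finset.sum_le_sum fun s _ => (hι s).1
        have h2 := Finset.add_sum_erase Finset.univ ι (Finset.mem_univ t)
        have h3 : ∑ s ∈ Finset.univ.erase t, (1 : ℤ) = ((d - 1 - 1 : ℕ) : ℤ) := by
          rw [Finset.sum_const, Finset.card_erase_of_mem (Finset.mem_univ t)]
          simp
        omega
      have hm := S.hom_degree (d - 1) (by omega) ι (fun t => ι t / 3 * d + ι t % 3) x
        (fun t => ih' (ι t) (by have := (hι t).1; omega) (hlt t) (hι t).2)
      obtain ⟨t₀, ht₀, hne⟩ := hc
      have hmod : ∑ t, ι t % 3 = (d : ℤ) := by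
        rw [← Finset.add_sum_erase Finset.univ (fun t => ι t % 3) (Finset.mem_univ t₀)]
        rw [Finset.sum_congr rfl (fun t ht => hne t (Finset.ne_of_mem_erase ht))]
        rw [Finset.sum_const, Finset.card_erase_of_mem (Finset.mem_univ t₀)]
        simp only [ht₀, Finset.card_univ, Fintype.card_fin, nsmul_eq_mul, mul_one]
        omega
      have hdiv : ∑ t, ι t = 3 * ∑ t, ι t / 3 + ∑ t, ι t % 3 := by
        rw [Finset.mul_sum, ← Finset.sum_add_distrib]
        exact Finset.sum_congr rfl fun t _ => (Int.mul_ediv_add_emod _ _).symm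
      have e1 : ∑ t, (ι t / 3 * d + ι t % 3) = z / 3 * (d : ℤ) + z % 3 := by
        rw [Finset.sum_add_distrib, ← Finset.sum_mul, hmod]
        have h1 : z / 3 = ∑ t, ι t / 3 + 1 := by omega
        have h2 : z % 3 = 0 := by omega
        rw [h1, h2]; ring
      rw [hsum, e1] at hm
      exact hm
    · rw [hred3 ι x (fun t => (hι t).2) hc]
      exact Submodule.zero_mem _

open GradedAlg AInf in
theorem edeg_le_of_extComp {F : Type} [Field F] {𝒜 : GradedAlg F} {T : 𝒜.GMod} {R : MinRes T}
    {μ : ∀ i j : ℕ, ExtQ T R i →ₗ[F] ExtQ T R j →ₗ[F] ExtQ T R (i + j)}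
    {S : BigradedAInfty F} (hS : AInftyOnExt 𝒜 T R μ S) (n : ℕ) (j : ℤ) :
    Edeg S (n : ℤ) ≤ S.comp n j ↔ extComp T R n j = ⊤ := by
  rw [← hS.ψ_comp, ← Submodule.comap_subtype_eq_top]
  constructor
  · intro h
    rw [h, Submodule.map_top, LinearMap.range_eq_top]
    exact (hS.ψ n).surjective
  · intro h
    rw [eq_top_iff]
    rintro x -
    have : hS.ψ n x ∈ (⊤ : Submodule F (ExtQ T R n)) := trivial
    rw [← h] at this
    obtain ⟨y, hy, hyx⟩ := this
    rwa [← (hS.ψ n).injective hyx]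

open GradedAlg AInf in
/-- **Theorem 5.6(2).** Let `A = F ⊕ A_1 ⊕ A_2 ⊕ ⋯` be a graded algebra generated in
degree `1`, let `d > 3`, and suppose the `A_∞`-structure on `E(A)` (with `m_1 = 0` and
`m_2` the Yoneda product) has `m_2` and `m_{d−1}` as its only nontrivial
multiplications, and that `(E(A), m_2, m_{d−1})` is a reduced `(2, d−1)`-algebra
generated by `E^1(A)`.  Then `A` is piecewise-Koszul with period `3` and jump degree
`d`, i.e. `Ext^n_A(F,F) = Ext^n_A(F,F)_{δ^d_3(n)}` for all `n ≥ 0`. -/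
theorem isPKAlg_of_reduced_two_l_algebra
    {F : Type} [Field F] (𝒜 : GradedAlg F) (hA : 𝒜.Standing)
    (h0 : 𝒜.grading 0 = Submodule.span F {1})
    (d : ℕ) (hd : 3 < d)
    (T : 𝒜.GMod) (hT : IsTrivialGMod T)
    (R : MinRes T)
    (μ : ∀ i j : ℕ, ExtQ T R i →ₗ[F] ExtQ T R j →ₗ[F] ExtQ T R (i + j))
    (hμ : IsYonedaMul T R R μ)
    (S : BigradedAInfty F) (hS : AInftyOnExt 𝒜 T R μ S)
    -- the only nontrivial multiplications are `m_2` and `m_{d−1}`: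
    (honly : ∀ q : ℕ, q ≠ 2 → q ≠ d - 1 → S.m q = 0)
    -- reduced `(2, d−1)`-algebra, condition (1): `E = F ⊕ E^1 ⊕ E^2 ⊕ ⋯`:
    (hred1 : Module.finrank F ↥(Edeg S 0) = 1)
    -- condition (2): `m_2(E^{3k₁+s₁} ⊗ E^{3k₂+s₂}) = 0` for `s₁,s₂ ∈ {1,2}`, `3 ≤ s₁+s₂ ≤ 4`:
    (hred2 : ∀ k₁ k₂ s₁ s₂ : ℕ, (s₁ = 1 ∨ s₁ = 2) → (s₂ = 1 ∨ s₂ = 2) →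
      3 ≤ s₁ + s₂ → s₁ + s₂ ≤ 4 →
      ∀ x y : S.V, x ∈ Edeg S ((3 * k₁ + s₁ : ℕ) : ℤ) →
        y ∈ Edeg S ((3 * k₂ + s₂ : ℕ) : ℤ) → S.m 2 ![x, y] = 0)
    -- condition (3): `m_{d−1}(E^{i_1} ⊗ ⋯ ⊗ E^{i_{d−1}}) = 0` unless exactly one
    -- `i_j ≡ 2 (mod 3)` and the others are `≡ 1 (mod 3)`:
    (hred3 : ∀ (ι : Fin (d - 1) → ℤ) (x : Fin (d - 1) → S.V),
      (∀ t, x t ∈ Edeg S (ι t)) →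
      (¬ ∃ t₀ : Fin (d - 1), ι t₀ % 3 = 2 ∧ ∀ t, t ≠ t₀ → ι t % 3 = 1) →
      S.m (d - 1) x = 0)
    -- the reduced `(2, d−1)`-algebra `E(A)` is generated by `E^1(A)`:
    (hgen : ReducedGenByE1 S (d - 1)) :
    𝒜.IsPKAlg 3 d T ∧
    ∀ (R' : MinRes T) (n : ℕ), extComp T R' n (jump d 3 n : ℤ) = ⊤ := by
  have h00 := (edeg_le_of_extComp hS 0 0).2 (extComp_of_topDeg hT R 0 0 (topDeg_zero hT R))
  have h11 := (edeg_le_of_extComp hS 1 1).2 (extComp_of_topDeg hT R 1 1 (topDeg_one hA hT R))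
  have hle := edeg_le_comp d hd S h00 h11 hred2 hred3 hgen
  have htop : ∀ n : ℕ, TopDeg (R.P n) (jump d 3 n : ℤ) := by
    intro n
    refine topDeg_of_extComp h0 hT R n _ ((edeg_le_of_extComp hS n _).1 ?_)
    rw [jump_three]
    exact hle n n rfl
  refine ⟨⟨R, fun n => ?_⟩, fun R' n => ?_⟩
  · have := R.fg n
    rw [add_zero]
    exact genInDeg_of_topDeg _ _ (htop n)
  · exact extComp_of_topDeg hT R' n _ (topDeg_transfer R R' n _ (htop n))
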